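/- For every integer n ≥ 1, every integer M with 1 ≤ M ≤ n−1, and every q ∈ (0,1), the success probability of the strategy S(n,M) under the Mallows distribution with parameter q is 𝒫_n^q(S(n,M)) = ((1−q)/(1−q^n)) · q^{n−M−1} · (1−q^M) · Σ_{j=M+1}^{n} 1/(1−q^{j−1}). -/

import Mathlib

open Finset Filter

/-- The number of inversions of a permutation of `Fin n`. -/
def invCount (n : ℕ) (σ : Equiv.Perm (Fin n)) : ℕ :=
  (Finset.univ.filter (fun p : Fin n × Fin n => p.1 < p.2 ∧ σ p.2 < σ p.1)).card

/-- Normalization constant of the Mallows distribution: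
`Z_n(q) = ∑_{σ ∈ S_n} q^{inv σ}`. -/
noncomputable def mallowsZ (n : ℕ) (q : ℝ) : ℝ :=
  ∑ σ : Equiv.Perm (Fin n), q ^ invCount n σ

/-- The Mallows probability of a set `A` of permutations:
`P_n^q(A) = (∑_{σ ∈ A} q^{inv σ}) / Z_n(q)`. -/
noncomputable def mallowsProb (n : ℕ) (q : ℝ) (A : Finset (Equiv.Perm (Fin n))) : ℝ :=
  (∑ σ ∈ A, q ^ invCount n σ) / mallowsZ n q

/-- The success event for the strategy `S(n,M)`.  Positions are indexed by `Fin n`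
(the index `i : Fin n` represents the `(i+1)`-st arriving item) and ranks are the
values of `σ` (the value `n-1`, i.e. the top of `Fin n`, represents the highest
rank `n`).  For `M ≥ 1` the strategy succeeds iff for some position `j` with
`(j:ℕ) ≥ M` (i.e. item number `j+1 ≥ M+1`) the item at position `j` has the top
rank and the maximum rank among the items strictly before position `j` equals the
maximum rank among the first `M` items.  For `M = 0` it succeeds iff the first
item has top rank. -/
def winEvent (n M : ℕ) : Finset (Equiv.Perm (Fin n)) :=
  if M = 0 then
    Finset.univ.filter (fun σ => ∀ i : Fin n, (i : ℕ) = 0 → (σ i : ℕ) = n - 1)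
  else
    Finset.univ.filter (fun σ => ∃ j : Fin n, M ≤ (j : ℕ) ∧ (σ j : ℕ) = n - 1 ∧
      (Finset.univ.filter (fun i : Fin n => i < j)).sup (fun i => (σ i : ℕ)) =
      (Finset.univ.filter (fun i : Fin n => (i : ℕ) < M)).sup (fun i => (σ i : ℕ)))

/-- `𝒫_n^q(S(n,M))`, the success probability of the strategy `S(n,M)` under the
Mallows distribution with parameter `q`. -/
noncomputable def succProb (n M : ℕ) (q : ℝ) : ℝ := mallowsProb n q (winEvent n M)

/-!
Deleting the last arrival, of rank `v` counted from `0`, from a permutation of `n + 1` items leaves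
a permutation of `n` items and removes exactly `n - v` inversions. Write
`[k] = 1 + q + ⋯ + q ^ (k - 1)`. Under the Mallows distribution the last of `n + 1` items is
therefore the best one with probability `1 / [n + 1]`, and what precedes it
is again Mallows distributed.

If the last item is the best one, then `S(n + 1, M)` selects it exactly when the best of the first
`n` items is among the first `M`; otherwise the last item is irrelevant. The two events "the best
item is among the first `M`" and "the strategy succeeds" thus satisfy linear recurrences in `n`,
started at `n = M`, where their probabilities are `1` and `0`.
-/

/-- The `q`-analogue `[k] = 1 + q + ⋯ + q ^ (k - 1)` of the natural number `k`. Unlike the quotient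
`(1 - q ^ k) / (1 - q)`, it has the right value `k` at `q = 1`. -/
def qInt {R : Type*} [Semiring R] (q : R) (k : ℕ) : R := ∑ i ∈ range k, q ^ i

theorem qInt_succ {R : Type*} [Semiring R] (q : R) (k : ℕ) : qInt q (k + 1) = 1 + q * qInt q k := by
  rw [qInt, geom_sum_succ, add_comm, qInt]

theorem qInt_ne_zero {R : Type*} [Ring R] [LinearOrder R] [IsStrictOrderedRing R] {q : R} {k : ℕ}
    (hq : q ≠ -1) (hk : k ≠ 0) : qInt q k ≠ 0 :=
  geom_sum_ne_zero hq hk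

theorem qInt_eq_div {K : Type*} [Field K] {q : K} (hq : q ≠ 1) (k : ℕ) :
    qInt q k = (1 - q ^ k) / (1 - q) := by
  rw [qInt, geom_sum_eq hq, ← neg_div_neg_eq, neg_sub, neg_sub]

theorem qInt_div_mul_sum {K : Type*} [Field K] {q : K} (hq : q ≠ 1) (c : K) (M n : ℕ) :
    c * qInt q M / qInt q n * ∑ j ∈ Icc (M + 1) n, 1 / qInt q (j - 1) =
      (1 - q) / (1 - q ^ n) * c * (1 - q ^ M) *
        ∑ j ∈ Icc (M + 1) n, 1 / (1 - q ^ (j - 1)) := by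
  have hq' : 1 - q ≠ 0 := sub_ne_zero.2 hq.symm
  have sum_eq : ∑ j ∈ Icc (M + 1) n, 1 / qInt q (j - 1) =
      (1 - q) * ∑ j ∈ Icc (M + 1) n, 1 / (1 - q ^ (j - 1)) := by
    simp only [qInt_eq_div hq, one_div_div, mul_sum, mul_one_div]
  rw [sum_eq, qInt_eq_div hq, qInt_eq_div hq]
  field_simp

theorem sum_pow_sub_val {R : Type*} [Semiring R] (q : R) (n : ℕ) :
    ∑ v : Fin n, q ^ (n - (v : ℕ)) = q * qInt q n := by
  rw [Fin.sum_univ_eq_sum_range (fun v => q ^ (n - v)), ← sum_range_reflect, qInt, mul_sum]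
  refine sum_congr rfl fun i hi => ?_
  rw [mem_range] at hi
  rw [← pow_succ', show n - (n - 1 - i) = i + 1 by omega]

theorem invCount_eq_sum {n : ℕ} (σ : Equiv.Perm (Fin n)) :
    invCount n σ = ∑ i, ∑ j, if i < j ∧ σ j < σ i then 1 else 0 := by
  rw [invCount, card_filter, Fintype.sum_prod_type]

/-- The permutation of `n + 1` items in which the last arrival has rank `v`, counted from `0`, and
the arrivals before it are ordered relative to each other as in `τ`. -/
def insertLast {n : ℕ} (v : Fin (n + 1)) (τ : Equiv.Perm (Fin n)) : Equiv.Perm (Fin (n + 1)) :=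
  (finSuccEquivLast.trans (Equiv.optionCongr τ)).trans (finSuccEquiv' v).symm

section InsertLast

variable {n : ℕ} (v : Fin (n + 1)) (τ : Equiv.Perm (Fin n))

@[simp]
theorem insertLast_last : insertLast v τ (Fin.last n) = v := by
  simp [insertLast]

@[simp]
theorem insertLast_castSucc (i : Fin n) : insertLast v τ i.castSucc = v.succAbove (τ i) := by
  simp [insertLast]

theorem insertLast_bijective :
    Function.Bijective fun p : Fin (n + 1) × Equiv.Perm (Fin n) => insertLast p.1 p.2 := by
  refine (Fintype.bijective_iff_injective_and_card _).2
    ⟨?_, by simp [Fintype.card_perm, Nat.factorial_succ]⟩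
  rintro ⟨v, τ⟩ ⟨w, ρ⟩ (h : insertLast v τ = insertLast w ρ)
  obtain rfl : v = w := by simpa using DFunLike.congr_fun h (Fin.last n)
  obtain rfl : τ = ρ := Equiv.ext fun i => by simpa using DFunLike.congr_fun h i.castSucc
  rfl

theorem sum_ite_lt_succAbove : (∑ i, if v < v.succAbove i then 1 else 0) = n - (v : ℕ) :=
  calc (∑ i, if v < v.succAbove i then 1 else 0)
      = ∑ w, if v < w then 1 else 0 := by simp [Fin.sum_univ_succAbove _ v]
    _ = #(Ioi v) := by rw [← card_filter, filter_lt_eq_Ioi]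
    _ = n - (v : ℕ) := by simp

theorem invCount_insertLast :
    invCount (n + 1) (insertLast v τ) = (n - (v : ℕ)) + invCount n τ := by
  have not_last_lt (i : Fin n) : ¬ Fin.last n < i.castSucc := (Fin.castSucc_lt_last i).not_gt
  simp only [invCount_eq_sum, Fin.sum_univ_castSucc, insertLast_last, insertLast_castSucc,
    Fin.castSucc_lt_castSucc_iff, Fin.succAbove_lt_succAbove_iff, Fin.castSucc_lt_last, true_and,
    not_last_lt, lt_irrefl, false_and, if_false, sum_const_zero, add_zero, sum_add_distrib]
  rw [Equiv.sum_comp τ fun i => if v < v.succAbove i then 1 else 0, sum_ite_lt_succAbove, add_comm]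

end InsertLast

section Recurrence

variable {n : ℕ} {A : Finset (Equiv.Perm (Fin (n + 1)))} {B C : Finset (Equiv.Perm (Fin n))}

theorem sum_pow_invCount_succ {R : Type*} [CommSemiring R] (q : R)
    (hB : ∀ τ, insertLast (Fin.last n) τ ∈ A ↔ τ ∈ B)
    (hC : ∀ (v : Fin n) τ, insertLast v.castSucc τ ∈ A ↔ τ ∈ C) :
    ∑ σ ∈ A, q ^ invCount (n + 1) σ =
      ∑ τ ∈ B, q ^ invCount n τ + q * qInt q n * ∑ τ ∈ C, q ^ invCount n τ :=
  calc ∑ σ ∈ A, q ^ invCount (n + 1) σ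
      = ∑ v, ∑ τ, if insertLast v τ ∈ A then q ^ invCount (n + 1) (insertLast v τ) else 0 := by
        rw [← Fintype.sum_ite_mem A, ← insertLast_bijective.sum_comp, Fintype.sum_prod_type]
    _ = ∑ v : Fin n, q ^ (n - (v : ℕ)) * ∑ τ ∈ C, q ^ invCount n τ +
          ∑ τ ∈ B, q ^ invCount n τ := by
        simp [Fin.sum_univ_castSucc, hB, hC, invCount_insertLast, pow_add, mul_sum]
    _ = ∑ τ ∈ B, q ^ invCount n τ + q * qInt q n * ∑ τ ∈ C, q ^ invCount n τ := by
        rw [← sum_mul, sum_pow_sub_val, add_comm]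

theorem mallowsZ_succ (n : ℕ) (q : ℝ) : mallowsZ (n + 1) q = qInt q (n + 1) * mallowsZ n q := by
  rw [qInt_succ, add_mul, one_mul]
  exact sum_pow_invCount_succ q (by simp) (by simp)

theorem mallowsZ_ne_zero {q : ℝ} (hq : q ≠ -1) (n : ℕ) : mallowsZ n q ≠ 0 := by
  induction n with
  | zero => simp [mallowsZ, invCount]
  | succ n ih => exact mallowsZ_succ n q ▸ mul_ne_zero (qInt_ne_zero hq n.succ_ne_zero) ih

theorem mallowsProb_univ {q : ℝ} (hq : q ≠ -1) (n : ℕ) : mallowsProb n q univ = 1 :=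
  div_self (mallowsZ_ne_zero hq n)

theorem mallowsProb_succ (q : ℝ)
    (hB : ∀ τ, insertLast (Fin.last n) τ ∈ A ↔ τ ∈ B)
    (hC : ∀ (v : Fin n) τ, insertLast v.castSucc τ ∈ A ↔ τ ∈ C) :
    mallowsProb (n + 1) q A =
      (mallowsProb n q B + q * qInt q n * mallowsProb n q C) / qInt q (n + 1) := by
  rw [mallowsProb, mallowsProb, mallowsProb, sum_pow_invCount_succ q hB hC, mallowsZ_succ]
  ring

end Recurrence

/-- The event that the best of all `n` items is among the first `M` arrivals, expressed by saying
that each item is matched or beaten by one of the first `M`. -/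
def topInFirst (n M : ℕ) : Finset (Equiv.Perm (Fin n)) :=
  {σ | ∀ i, ∃ k : Fin n, (k : ℕ) < M ∧ σ i ≤ σ k}

theorem val_eq_pred_iff_forall_le {n : ℕ} (σ : Equiv.Perm (Fin n)) (j : Fin n) :
    (σ j : ℕ) = n - 1 ↔ ∀ i, σ i ≤ σ j := by
  constructor
  · intro h i
    rw [Fin.le_def]
    omega
  · intro h
    have := j.isLt
    have top_le : n - 1 ≤ (σ j : ℕ) := by
      simpa using Fin.le_def.1 (h (σ.symm ⟨n - 1, by omega⟩))
    omega

theorem le_sup_iff_of_nonempty {ι α : Type*} [LinearOrder α] [OrderBot α] {s : Finset ι}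
    (hs : s.Nonempty) {f : ι → α} {a : α} : a ≤ s.sup f ↔ ∃ i ∈ s, a ≤ f i := by
  rw [← sup'_eq_sup hs, le_sup'_iff]

theorem mem_winEvent {n M : ℕ} (hM : M ≠ 0) (σ : Equiv.Perm (Fin n)) :
    σ ∈ winEvent n M ↔ ∃ j : Fin n, M ≤ (j : ℕ) ∧ (∀ i, σ i ≤ σ j) ∧
      ∀ i < j, ∃ k : Fin n, (k : ℕ) < M ∧ σ i ≤ σ k := by
  rw [winEvent, if_neg hM, mem_filter_univ]
  refine exists_congr fun j => and_congr_right fun hMj =>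
    and_congr (val_eq_pred_iff_forall_le σ j) ?_
  have first_nonempty : (univ.filter fun i : Fin n => (i : ℕ) < M).Nonempty :=
    ⟨⟨0, by omega⟩, by simpa using Nat.pos_of_ne_zero hM⟩
  have first_subset : (univ.filter fun i : Fin n => (i : ℕ) < M) ⊆ univ.filter (· < j) :=
    monotone_filter_right _ fun _ _ hi => Fin.lt_def.2 (lt_of_lt_of_le hi hMj)
  rw [le_antisymm_iff, and_iff_left (sup_mono first_subset), Finset.sup_le_iff]
  simp [le_sup_iff_of_nonempty first_nonempty]

theorem le_succAbove_iff {n : ℕ} (p : Fin (n + 1)) (i : Fin n) :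
    p ≤ p.succAbove i ↔ p ≤ i.castSucc := by
  rw [(Fin.ne_succAbove p i).le_iff_lt, Fin.lt_succAbove_iff_le_castSucc]

theorem succAbove_le_iff {n : ℕ} (p : Fin (n + 1)) (i : Fin n) :
    p.succAbove i ≤ p ↔ i.castSucc < p := by
  rw [(Fin.succAbove_ne p i).le_iff_lt, Fin.succAbove_lt_iff_castSucc_lt]

section LastArrival

variable {n M : ℕ}

theorem insertLast_last_notMem_topInFirst (hMn : M ≤ n) (τ : Equiv.Perm (Fin n)) :
    insertLast (Fin.last n) τ ∉ topInFirst (n + 1) M := by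
  simp [topInFirst, Fin.forall_fin_succ', Fin.exists_fin_succ', hMn]

theorem insertLast_castSucc_mem_topInFirst_iff (hMn : M ≤ n) (v : Fin n) (τ : Equiv.Perm (Fin n)) :
    insertLast v.castSucc τ ∈ topInFirst (n + 1) M ↔ τ ∈ topInFirst n M := by
  have last_beaten (h : ∀ i, ∃ k : Fin n, (k : ℕ) < M ∧ τ i ≤ τ k) :
      ∃ k : Fin n, (k : ℕ) < M ∧ v ≤ τ k := by
    simpa using h (τ.symm v)
  simpa [topInFirst, Fin.forall_fin_succ', Fin.exists_fin_succ', hMn.not_gt,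
    le_succAbove_iff] using last_beaten

theorem insertLast_last_mem_winEvent_iff (hM : M ≠ 0) (hMn : M ≤ n) (τ : Equiv.Perm (Fin n)) :
    insertLast (Fin.last n) τ ∈ winEvent (n + 1) M ↔ τ ∈ topInFirst n M := by
  simp [mem_winEvent hM, topInFirst, Fin.forall_fin_succ', Fin.exists_fin_succ', hMn, hMn.not_gt,
    Fin.le_last]

theorem insertLast_castSucc_mem_winEvent_iff (hM : M ≠ 0) (hMn : M ≤ n) (v : Fin n)
    (τ : Equiv.Perm (Fin n)) :
    insertLast v.castSucc τ ∈ winEvent (n + 1) M ↔ τ ∈ winEvent n M := by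
  have last_not_top : ¬ ∀ i, τ i < v := fun h => by simpa using h (τ.symm v)
  have top_iff (j : Fin n) : ((∀ i, τ i ≤ τ j) ∧ v ≤ τ j) ↔ ∀ i, τ i ≤ τ j :=
    and_iff_left_of_imp fun h => by simpa using h (τ.symm v)
  simp [mem_winEvent hM, Fin.forall_fin_succ', Fin.exists_fin_succ', hMn.not_gt,
    le_succAbove_iff, succAbove_le_iff, last_not_top, top_iff, (Fin.castSucc_lt_last _).not_gt]

end LastArrival

section Probabilities

variable {n M : ℕ}

theorem mallowsProb_topInFirst {q : ℝ} (hq : q ≠ -1) (hM : M ≠ 0) (hMn : M ≤ n) :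
    mallowsProb n q (topInFirst n M) = q ^ (n - M) * qInt q M / qInt q n := by
  induction n, hMn using Nat.le_induction with
  | base =>
    have topInFirst_self : topInFirst M M = univ :=
      filter_true_of_mem fun σ _ i => ⟨i, i.isLt, le_rfl⟩
    rw [topInFirst_self, mallowsProb_univ hq, Nat.sub_self, pow_zero, one_mul,
      div_self (qInt_ne_zero hq hM)]
  | succ n hMn ih =>
    have hn : qInt q n ≠ 0 := qInt_ne_zero hq (by omega)
    rw [mallowsProb_succ q (B := ∅) (by simpa using insertLast_last_notMem_topInFirst hMn)
      (insertLast_castSucc_mem_topInFirst_iff hMn), ih, Nat.succ_sub hMn, pow_succ]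
    simp only [mallowsProb, sum_empty, zero_div, zero_add]
    field_simp

theorem succProb_succ (q : ℝ) (hM : M ≠ 0) (hMn : M ≤ n) :
    succProb (n + 1) M q =
      (mallowsProb n q (topInFirst n M) + q * qInt q n * succProb n M q) / qInt q (n + 1) :=
  mallowsProb_succ q (insertLast_last_mem_winEvent_iff hM hMn)
    (insertLast_castSucc_mem_winEvent_iff hM hMn)

theorem succProb_self (q : ℝ) (hM : M ≠ 0) : succProb M M q = 0 := by
  have winEvent_self : winEvent M M = ∅ := by
    refine eq_empty_of_forall_notMem fun σ hσ => ?_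
    obtain ⟨j, hMj, -⟩ := (mem_winEvent hM σ).1 hσ
    exact hMj.not_gt j.isLt
  simp [succProb, mallowsProb, winEvent_self]

end Probabilities

theorem stmt_0_general {n M : ℕ} {q : ℝ} (hM : M ≠ 0) (hMn : M < n) (hq : q ≠ -1) :
    succProb n M q =
      q ^ (n - M - 1) * qInt q M / qInt q n * ∑ j ∈ Icc (M + 1) n, 1 / qInt q (j - 1) := by
  induction n, hMn using Nat.le_induction with
  | base =>
    have hqM : qInt q M ≠ 0 := qInt_ne_zero hq hM
    rw [succProb_succ q hM le_rfl, succProb_self q hM, mallowsProb_topInFirst hq hM le_rfl,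
      Icc_self, sum_singleton, Nat.succ_eq_add_one, Nat.add_sub_cancel, Nat.add_sub_cancel_left,
      Nat.sub_self]
    field_simp
    ring
  | succ n hMn ih =>
    have hn : qInt q n ≠ 0 := qInt_ne_zero hq (by omega)
    have pow_eq : q ^ (n - M) = q * q ^ (n - M - 1) := by
      rw [← pow_succ', Nat.sub_add_cancel (by omega)]
    rw [succProb_succ q hM (by omega), mallowsProb_topInFirst hq hM (by omega), ih,
      sum_Icc_succ_top (by omega), Nat.add_sub_cancel, show n + 1 - M - 1 = n - M by omega,
      pow_eq]
    field_simp
    ring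

theorem stmt_0 (n M : ℕ) (q : ℝ) (hn : 1 ≤ n) (hM1 : 1 ≤ M) (hM2 : M ≤ n - 1)
    (hq : q ∈ Set.Ioo (0 : ℝ) 1) :
    succProb n M q =
      (1 - q) / (1 - q ^ n) * q ^ (n - M - 1) * (1 - q ^ M) *
        ∑ j ∈ Finset.Icc (M + 1) n, 1 / (1 - q ^ (j - 1)) := by
  rw [stmt_0_general (by omega) (by omega) (by linarith [hq.1]), qInt_div_mul_sum hq.2.ne]
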